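/- Assume conditions (A), (S), (S)₂ and (K). Then the system is uniformly dissipative of type (1,1): there exists a constant c > 0 such that for every r ≥ 0, every ω ∈ S^{n−1}, every λ ∈ ℂ and every nonzero φ ∈ ℂᵐ satisfying (λA⁰ + i r A(ω) + L)φ = 0, one has Re λ ≤ −c ρ(r), where ρ(r) = r²/(1 + r²). -/

import Mathlib

open Matrix BigOperators Finset

noncomputable section

/-- Complexification of a real matrix. -/
def cmap {a b : ℕ} (X : Matrix (Fin a) (Fin b) ℝ) : Matrix (Fin a) (Fin b) ℂ :=
  X.map (fun x => (x : ℂ))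

/-- Real part of the standard Hermitian inner product `⟨x, y⟩ = ∑ xᵢ conj yᵢ` on `ℂᵐ`. -/
def reIP {m : ℕ} (x y : Fin m → ℂ) : ℝ := (∑ i, x i * (starRingEnd ℂ) (y i)).re

/-- Symmetric part `X₁ = (X + Xᵀ)/2` of a real square matrix. -/
def symP {m : ℕ} (X : Matrix (Fin m) (Fin m) ℝ) : Matrix (Fin m) (Fin m) ℝ :=
  (2⁻¹ : ℝ) • (X + Xᵀ)

/-- Skew-symmetric part `X₂ = (X − Xᵀ)/2` of a real square matrix. -/
def skewP {m : ℕ} (X : Matrix (Fin m) (Fin m) ℝ) : Matrix (Fin m) (Fin m) ℝ :=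
  (2⁻¹ : ℝ) • (X - Xᵀ)

/-- Kernel of (the complexification of) a real matrix, as a subset of `ℂᵐ`. -/
def kerC {m : ℕ} (L : Matrix (Fin m) (Fin m) ℝ) : Set (Fin m → ℂ) :=
  {z | (cmap L).mulVec z = 0}

/-- Euclidean norm on `ℂᵐ`. -/
def cnrm {m : ℕ} (z : Fin m → ℂ) : ℝ := Real.sqrt (∑ i, Complex.normSq (z i))

/-- the quadratic form of a real matrix on complex vectors -/
def qf {m : ℕ} (X : Matrix (Fin m) (Fin m) ℝ) (z : Fin m → ℂ) : ℂ :=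
  ((cmap X).mulVec z) ⬝ᵥ star z

lemma reIP_eq {m : ℕ} (x y : Fin m → ℂ) : reIP x y = (x ⬝ᵥ star y).re := by
  simp [reIP, dotProduct]

lemma qf_eq_sum {m : ℕ} (X : Matrix (Fin m) (Fin m) ℝ) (z : Fin m → ℂ) :
    qf X z = ∑ i, ∑ j, (X i j : ℂ) * z j * star (z i) := by
  simp [qf, cmap, dotProduct, mulVec, Finset.sum_mul]

lemma qf_add {m : ℕ} (X Y : Matrix (Fin m) (Fin m) ℝ) (z : Fin m → ℂ) :
    qf (X + Y) z = qf X z + qf Y z := by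
  simp [qf_eq_sum, add_mul, Finset.sum_add_distrib]

lemma qf_smul {m : ℕ} (a : ℝ) (X : Matrix (Fin m) (Fin m) ℝ) (z : Fin m → ℂ) :
    qf (a • X) z = a * qf X z := by
  simp [qf_eq_sum, mul_assoc, Finset.mul_sum]

lemma qf_neg {m : ℕ} (X : Matrix (Fin m) (Fin m) ℝ) (z : Fin m → ℂ) :
    qf (-X) z = - qf X z := by
  simp [qf_eq_sum]

lemma qf_transpose {m : ℕ} (X : Matrix (Fin m) (Fin m) ℝ) (z : Fin m → ℂ) :
    qf Xᵀ z = star (qf X z) := by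
  rw [qf_eq_sum, qf_eq_sum, Finset.sum_comm, star_sum]
  refine Finset.sum_congr rfl fun i _ => ?_
  rw [star_sum]
  refine Finset.sum_congr rfl fun j _ => ?_
  simp
  ring

lemma qf_symP_re {m : ℕ} (X : Matrix (Fin m) (Fin m) ℝ) (z : Fin m → ℂ) :
    (qf (symP X) z).re = (qf X z).re := by
  simp [symP, qf_smul, qf_add, qf_transpose, -Complex.ofReal_inv, -Complex.ofReal_ofNat]
  ring

lemma qf_skewP {m : ℕ} (X : Matrix (Fin m) (Fin m) ℝ) (z : Fin m → ℂ) :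
    (Complex.I * qf (skewP X) z).re = - (qf X z).im := by
  rw [skewP, qf_smul, sub_eq_add_neg, qf_add, qf_neg, qf_transpose]
  simp [-Complex.ofReal_inv, -Complex.ofReal_ofNat]
  ring

lemma qf_sym_im {m : ℕ} {X : Matrix (Fin m) (Fin m) ℝ} (h : Xᵀ = X) (z : Fin m → ℂ) :
    (qf X z).im = 0 := by
  have := congrArg Complex.im (qf_transpose X z)
  rw [h] at this
  simp at this
  linarith

lemma qf_skew_re {m : ℕ} {X : Matrix (Fin m) (Fin m) ℝ} (h : Xᵀ = -X) (z : Fin m → ℂ) :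
    (qf X z).re = 0 := by
  have := congrArg Complex.re (qf_transpose X z)
  rw [h, qf_neg] at this
  simp at this
  linarith

lemma cmap_mul {m : ℕ} (X Y : Matrix (Fin m) (Fin m) ℝ) : cmap (X * Y) = cmap X * cmap Y := by
  ext i j
  simp [cmap, Matrix.mul_apply]

lemma qf_eqn {m : ℕ} (A0 B L T : Matrix (Fin m) (Fin m) ℝ) (lam : ℂ) (r : ℝ) (phi : Fin m → ℂ)
    (h : (lam • cmap A0 + ((r : ℂ) * Complex.I) • cmap B + cmap L).mulVec phi = 0) :
    lam * qf (T * A0) phi + (r * Complex.I) * qf (T * B) phi + qf (T * L) phi = 0 := by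
  have h2 : ((cmap T).mulVec
    ((lam • cmap A0 + ((r : ℂ) * Complex.I) • cmap B + cmap L).mulVec phi)) ⬝ᵥ star phi = 0 := by
    rw [h]; simp
  rw [← h2]
  simp only [qf, cmap_mul, add_mulVec, smul_mulVec, mulVec_add, mulVec_smul, add_dotProduct,
    smul_dotProduct, mulVec_mulVec, smul_eq_mul]

lemma factor_ker {V : Type*} [AddCommGroup V] [Module ℂ V] (Q L : V →ₗ[ℂ] V)
    (h : LinearMap.ker Q ≤ LinearMap.ker L) : ∃ M : V →ₗ[ℂ] V, M ∘ₗ Q = L := by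
  obtain ⟨g, hg⟩ := LinearMap.exists_extend
    (((LinearMap.ker Q).liftQ L h) ∘ₗ Q.quotKerEquivRange.symm.toLinearMap)
  refine ⟨g, ?_⟩
  ext x
  have := LinearMap.congr_fun hg ⟨Q x, ⟨x, rfl⟩⟩
  have h2 : Q.quotKerEquivRange.symm ⟨Q x, ⟨x, rfl⟩⟩ = (LinearMap.ker Q).mkQ x := by
    rw [LinearEquiv.symm_apply_eq]
    rfl
  have h3 : g (Q x) = (LinearMap.ker Q).liftQ L h (Q.quotKerEquivRange.symm ⟨Q x, ⟨x, rfl⟩⟩) := this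
  rw [h2] at h3
  simpa using h3

open scoped MatrixOrder ComplexOrder in
lemma coercive {m : ℕ} (B L : Matrix (Fin m) (Fin m) ℝ) (hB : Bᵀ = B)
    (hnn : ∀ z, 0 ≤ (qf B z).re) (hker : kerC B = kerC L) :
    ∃ C : ℝ, ∀ z, ‖(cmap L).mulVec z‖ ^ 2 ≤ C * (qf B z).re := by
  have hps : (cmap B).PosSemidef := by
    refine .of_dotProduct_mulVec_nonneg ?_ fun z => ?_
    · ext i j
      simpa [cmap] using congrFun (congrFun hB i) j
    · rw [dotProduct_comm, Complex.nonneg_iff]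
      exact ⟨hnn z, (qf_sym_im hB z).symm⟩
  obtain ⟨Q, hQ⟩ := CStarAlgebra.nonneg_iff_eq_star_mul_self.mp hps.nonneg
  have hq : ∀ z, qf B z = (Q.mulVec z) ⬝ᵥ star (Q.mulVec z) := by
    intro z
    rw [qf, hQ, ← mulVec_mulVec, dotProduct_comm, star_mulVec, star_eq_conjTranspose,
      dotProduct_mulVec, dotProduct_comm]
  have hle : LinearMap.ker (Matrix.toLin' Q) ≤ LinearMap.ker (Matrix.toLin' (cmap L)) := by
    intro z hz
    have hz' : Q.mulVec z = 0 := by simpa using hz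
    have : z ∈ kerC L := by
      rw [← hker]
      show (cmap B).mulVec z = 0
      rw [hQ, ← mulVec_mulVec, hz', mulVec_zero]
    simpa [kerC] using this
  obtain ⟨M, hM⟩ := factor_ker _ _ hle
  refine ⟨‖LinearMap.toContinuousLinearMap M‖ ^ 2, fun z => ?_⟩
  have h1 : (cmap L).mulVec z = LinearMap.toContinuousLinearMap M (Q.mulVec z) := by
    have := LinearMap.congr_fun hM z
    simpa using this.symm
  have h2 := (LinearMap.toContinuousLinearMap M).le_opNorm (Q.mulVec z)
  have h3 : ‖Q.mulVec z‖ ^ 2 ≤ (qf B z).re := by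
    rw [hq]
    have hs : ((Q.mulVec z) ⬝ᵥ star (Q.mulVec z)).re = ∑ i, ‖Q.mulVec z i‖ ^ 2 := by
      simp [dotProduct, Complex.mul_conj, Complex.normSq_eq_norm_sq, ← Complex.ofReal_pow]
    rw [hs]
    have hn : 0 ≤ ∑ i, ‖Q.mulVec z i‖ ^ 2 := Finset.sum_nonneg fun i _ => by positivity
    have : ‖Q.mulVec z‖ ≤ Real.sqrt (∑ i, ‖Q.mulVec z i‖ ^ 2) := by
      rw [pi_norm_le_iff_of_nonneg (Real.sqrt_nonneg _)]
      intro i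
      apply Real.le_sqrt_of_sq_le
      exact Finset.single_le_sum (f := fun i => ‖Q.mulVec z i‖ ^ 2)
        (fun i _ => by positivity) (Finset.mem_univ i)
    calc _ ≤ _ := pow_le_pow_left₀ (norm_nonneg _) this 2
      _ = _ := Real.sq_sqrt hn
  rw [h1]
  calc _ ≤ _ := pow_le_pow_left₀ (norm_nonneg _) h2 2
    _ = ‖LinearMap.toContinuousLinearMap M‖ ^ 2 * ‖Q.mulVec z‖ ^ 2 := by ring
    _ ≤ _ := by gcongr

lemma compact_bd {X : Type*} [TopologicalSpace X] {s : Set X} (hs : IsCompact s) (f : X → ℝ)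
    (hf : Continuous f) : ∃ C > 0, ∀ x ∈ s, |f x| ≤ C := by
  obtain ⟨C, hC⟩ := hs.exists_bound_of_continuousOn hf.continuousOn
  exact ⟨max C 1, by positivity, fun x hx => (hC x hx).trans (le_max_left _ _)⟩

lemma compact_comp {X : Type*} [TopologicalSpace X] {s : Set X} (hs : IsCompact s) (f g : X → ℝ)
    (hf : Continuous f) (hg : Continuous g) (hfn : ∀ x ∈ s, 0 ≤ f x)
    (h : ∀ x ∈ s, f x = 0 → 0 < g x) :
    ∃ c > 0, ∃ C > 0, ∀ x ∈ s, c - C * f x ≤ g x := by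
  obtain ⟨D, hD, hgD⟩ := compact_bd hs g hg
  have hmax : Continuous fun x => max (f x) (g x) := hf.max hg
  obtain ⟨c, hc, hcs⟩ : ∃ c > 0, ∀ x ∈ s, c ≤ max (f x) (g x) := by
    rcases s.eq_empty_or_nonempty with rfl | hne
    · exact ⟨1, one_pos, by simp⟩
    · obtain ⟨x, hx, hm⟩ := hs.exists_isMinOn hne hmax.continuousOn
      refine ⟨_, ?_, fun y hy => hm hy⟩
      rcases (hfn x hx).eq_or_lt with h0 | h0
      · exact lt_max_of_lt_right (h x hx h0.symm)
      · exact lt_max_of_lt_left h0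
  refine ⟨c, hc, (c + D) / c, by positivity, fun x hx => ?_⟩
  rcases le_max_iff.1 (hcs x hx) with h1 | h1
  · have : (c + D) ≤ (c + D) / c * f x := by
      rw [div_mul_eq_mul_div, le_div_iff₀ hc]
      gcongr
    have := neg_le_of_abs_le (hgD x hx)
    linarith
  · have : 0 ≤ (c + D) / c * f x := mul_nonneg (by positivity) (hfn x hx)
    linarith

/-- final scalar estimate -/
lemma scalar_est (c C : ℝ) (hc : 0 < c) (hC : 0 < C) : ∃ d > 0, ∀ r μ : ℝ, 0 ≤ r → 0 ≤ μ →
    ∀ h : ℝ, h ^ 2 ≤ C * μ → r * (c - C * μ) ≤ C * μ + h → d * (r ^ 2 / (1 + r ^ 2)) ≤ μ := by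
  have hd1 : 0 < min (c / (2 * C)) 1 := by positivity
  have hd2 : 0 < c ^ 2 / (8 * (C ^ 2 + C)) := by positivity
  refine ⟨min (min (c / (2 * C)) 1) (c ^ 2 / (8 * (C ^ 2 + C))), by positivity, ?_⟩
  intro r μ hr hμ h hh hm
  have hr1 : r ^ 2 / (1 + r ^ 2) ≤ 1 := by
    rw [div_le_one (by positivity)]; linarith
  have hr2 : r ^ 2 / (1 + r ^ 2) ≤ r ^ 2 := div_le_self (by positivity) (by nlinarith)
  have hr0 : 0 ≤ r ^ 2 / (1 + r ^ 2) := by positivity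
  by_cases hb : min (c / (2 * C)) 1 ≤ μ
  · calc _ ≤ min (c / (2 * C)) 1 * 1 := mul_le_mul (min_le_left _ _) hr1 hr0 hd1.le
      _ ≤ μ := by linarith
  · push Not at hb
    obtain ⟨hb1, hb2⟩ := lt_min_iff.1 hb
    rw [lt_div_iff₀ (by positivity)] at hb1
    have h1 : r * (c / 2) ≤ C * μ + h :=
      le_trans (mul_le_mul_of_nonneg_left (by linarith) hr) hm
    have h2 : (r * (c / 2)) ^ 2 ≤ (C * μ + h) ^ 2 := pow_le_pow_left₀ (by positivity) h1 2
    have h3 : (C * μ + h) ^ 2 ≤ 2 * (C ^ 2 + C) * μ := by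
      have : μ ^ 2 ≤ μ := by nlinarith
      have h5 : C ^ 2 * μ ^ 2 ≤ C ^ 2 * μ := by gcongr
      nlinarith [sq_nonneg (C * μ - h)]
    calc _ ≤ c ^ 2 / (8 * (C ^ 2 + C)) * r ^ 2 := mul_le_mul (min_le_right _ _) hr2 hr0 hd2.le
      _ ≤ μ := by
        rw [div_mul_eq_mul_div, div_le_iff₀ (by positivity)]
        nlinarith

lemma isCompact_sph (n : ℕ) : IsCompact {ω : Fin n → ℝ | ∑ j, ω j ^ 2 = 1} := by
  refine Metric.isCompact_of_isClosed_isBounded (isClosed_eq (by fun_prop) (by fun_prop)) ?_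
  refine (Metric.isBounded_closedBall (x := (0 : Fin n → ℝ)) (r := 1)).subset fun ω h => ?_
  rw [mem_closedBall_zero_iff, pi_norm_le_iff_of_nonneg zero_le_one]
  intro i
  rw [Real.norm_eq_abs, ← sq_le_one_iff_abs_le_one]
  rw [← show ∑ j, ω j ^ 2 = 1 from h]
  exact Finset.single_le_sum (f := fun i => ω i ^ 2) (fun i _ => by positivity) (Finset.mem_univ i)

lemma qf_mul_bound {m : ℕ} (K L : Matrix (Fin m) (Fin m) ℝ) (z : Fin m → ℂ) (hz : ‖z‖ = 1) :
    |(qf (K * L) z).im| ≤ (∑ i, ∑ j, |K i j|) * ‖(cmap L).mulVec z‖ := by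
  refine (Complex.abs_im_le_norm _).trans ?_
  have : qf (K * L) z = ∑ i, ∑ j, (K i j : ℂ) * (cmap L).mulVec z j * star (z i) := by
    rw [qf, cmap_mul, ← mulVec_mulVec]
    generalize (cmap L).mulVec z = w
    simp [cmap, dotProduct, mulVec, Finset.sum_mul]
  rw [this, Finset.sum_mul]
  refine (norm_sum_le _ _).trans (Finset.sum_le_sum fun i _ => ?_)
  rw [Finset.sum_mul]
  refine (norm_sum_le _ _).trans (Finset.sum_le_sum fun j _ => ?_)
  rw [norm_mul, norm_mul, norm_star, Complex.norm_real, Real.norm_eq_abs]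
  have h1 : ‖z i‖ ≤ 1 := hz ▸ norm_le_pi_norm z i
  have h2 := norm_le_pi_norm ((cmap L).mulVec z) j
  calc _ ≤ |K i j| * ‖(cmap L).mulVec z j‖ * 1 := by gcongr
    _ ≤ _ := by rw [mul_one]; gcongr

lemma qf_cont {m : ℕ} {X : Type*} [TopologicalSpace X] (F : X → Matrix (Fin m) (Fin m) ℝ)
    (hF : Continuous F) (p : X → Fin m → ℂ) (hp : Continuous p) :
    Continuous fun x => qf (F x) (p x) := by
  have h1 : ∀ i j, Continuous fun x => F x i j := fun i j => by fun_prop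
  have h2 : ∀ i, Continuous fun x => p x i := fun i => by fun_prop
  simp only [qf_eq_sum]
  refine continuous_finsetSum _ fun i _ => continuous_finsetSum _ fun j _ => ?_
  exact ((Complex.continuous_ofReal.comp (h1 i j)).mul (h2 j)).mul (continuous_star.comp (h2 i))

/-- **Theorem 2.2 (decay property of the standard type, pointwise estimate).**
Under conditions (A), (S), (S)₂ and (K), solutions of `A⁰û′ + i r A(ω) û + L û = 0` satisfy
`|û(t)| ≤ C e^{−c ρ(r) t} |û(0)|` with `η(r) = r²/(1+r²)²`. -/
theorem uniform_dissipativity_type_one_one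
    (m n : ℕ) (hm : 1 ≤ m) (hn : 1 ≤ n)
    (A0 : Matrix (Fin m) (Fin m) ℝ) (A : Fin n → Matrix (Fin m) (Fin m) ℝ)
    (L : Matrix (Fin m) (Fin m) ℝ)
    -- condition (A)
    (hA0sym : A0ᵀ = A0) (hAsym : ∀ j, (A j)ᵀ = A j)
    (hA0pos : ∀ z : Fin m → ℂ, z ≠ 0 → 0 < reIP ((cmap A0).mulVec z) z)
    (hLnn : ∀ z : Fin m → ℂ, 0 ≤ reIP ((cmap L).mulVec z) z)
    (hLker : ∃ z : Fin m → ℂ, z ≠ 0 ∧ z ∈ kerC L)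
    -- condition (S)
    (S : Matrix (Fin m) (Fin m) ℝ)
    (hSA0 : (S * A0)ᵀ = S * A0)
    (hSLnn : ∀ z : Fin m → ℂ, 0 ≤ reIP ((cmap (symP (S * L) + symP L)).mulVec z) z)
    (hSLker : kerC (symP (S * L) + symP L) = kerC L)
    -- condition (S)₂ : `i(SA(ω))₂ ≥ 0` on `ℂᵐ`
    (hS2 : ∀ ω : Fin n → ℝ, (∑ j, ω j ^ 2 = 1) → ∀ z : Fin m → ℂ,
      0 ≤ reIP ((Complex.I • cmap (skewP (S * (∑ j, ω j • A j)))).mulVec z) z)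
    -- condition (K): a smooth compensating matrix family
    (K : (Fin n → ℝ) → Matrix (Fin m) (Fin m) ℝ)
    (hKsmooth : ∀ i j, ContDiff ℝ (⊤ : ℕ∞) (fun ω => K ω i j))
    (hKodd : ∀ ω : Fin n → ℝ, (∑ j, ω j ^ 2 = 1) → K (-ω) = - K ω)
    (hKA0 : ∀ ω : Fin n → ℝ, (∑ j, ω j ^ 2 = 1) → (K ω * A0)ᵀ = -(K ω * A0))
    (hKpos : ∀ ω : Fin n → ℝ, (∑ j, ω j ^ 2 = 1) → ∀ z ∈ kerC L, z ≠ 0 →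
      0 < reIP ((cmap (symP (K ω * (∑ j, ω j • A j)))).mulVec z) z) :
    ∃ c > (0:ℝ), ∀ r : ℝ, 0 ≤ r → ∀ ω : Fin n → ℝ, (∑ j, ω j ^ 2 = 1) →
      ∀ lam : ℂ, ∀ phi : Fin m → ℂ, phi ≠ 0 →
      (lam • cmap A0 + ((r : ℂ) * Complex.I) • cmap (∑ j, ω j • A j) + cmap L).mulVec phi = 0 →
      lam.re ≤ -(c * (r ^ 2 / (1 + r ^ 2))) := by

  set AA : (Fin n → ℝ) → Matrix (Fin m) (Fin m) ℝ := fun ω => ∑ j, ω j • A j with hAA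
  have hAAsym : ∀ ω, (AA ω)ᵀ = AA ω := by
    intro ω
    simp [hAA, Matrix.transpose_sum, hAsym]
  set B := symP (S * L) + symP L with hBdef
  have hBre : ∀ z, (qf B z).re = (qf (S * L) z).re + (qf L z).re := by
    intro z
    rw [hBdef, qf_add, Complex.add_re, qf_symP_re, qf_symP_re]
  have hBsym : Bᵀ = B := by
    simp [hBdef, symP, add_comm]
  have hBnn : ∀ z, 0 ≤ (qf B z).re := fun z => by
    have := hSLnn z
    rwa [reIP_eq] at this
  obtain ⟨C1, hC1⟩ := coercive B L hBsym hBnn hSLker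
  have hKc : Continuous K :=
    continuous_pi fun i => continuous_pi fun j => (hKsmooth i j).continuous
  have hAc : Continuous AA := by fun_prop
  have hs : IsCompact ({ω : Fin n → ℝ | ∑ j, ω j ^ 2 = 1} ×ˢ Metric.sphere (0 : Fin m → ℂ) 1) :=
    (isCompact_sph n).prod (isCompact_sphere _ _)
  obtain ⟨c, hc, C2, hC2, hg⟩ := compact_comp hs (fun x => (qf B x.2).re)
    (fun x => (qf (K x.1 * AA x.1) x.2).re)
    (Complex.continuous_re.comp (qf_cont _ continuous_const _ continuous_snd))
    (Complex.continuous_re.comp (qf_cont _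
      ((hKc.comp continuous_fst).matrix_mul (hAc.comp continuous_fst)) _ continuous_snd))
    (fun x _ => hBnn _) (by
      rintro ⟨ω, z⟩ ⟨hω, hz⟩ h0
      have hz0 : z ≠ 0 := by
        rintro rfl
        simp at hz
      have hz1 : z ∈ kerC L := by
        have h1 := hC1 z
        simp only at h0
        rw [h0, mul_zero] at h1
        have : ‖(cmap L).mulVec z‖ = 0 := by
          have := norm_nonneg ((cmap L).mulVec z)
          nlinarith
        exact norm_eq_zero.1 this
      have := hKpos ω hω z hz1 hz0
      rw [reIP_eq] at this
      have h2 := qf_symP_re (K ω * AA ω) z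
      rw [← h2]
      exact this)
  obtain ⟨C3, hC3, hk⟩ := compact_bd hs (fun x => (qf (K x.1 * A0) x.2).im)
    (Complex.continuous_im.comp (qf_cont _
      ((hKc.comp continuous_fst).matrix_mul continuous_const) _ continuous_snd))
  obtain ⟨C4, hC4, ha⟩ := compact_bd (isCompact_sphere (0 : Fin m → ℂ) 1)
    (fun z => (qf A0 z).re + (qf (S * A0) z).re)
    ((Complex.continuous_re.comp (qf_cont _ continuous_const _ continuous_id)).add
      (Complex.continuous_re.comp (qf_cont _ continuous_const _ continuous_id)))
  obtain ⟨C5, hC5, hK5⟩ := compact_bd (isCompact_sph n) (fun ω => ∑ i, ∑ j, |K ω i j|)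
    (by
      have : ∀ i j, Continuous fun ω => K ω i j := fun i j => (hKsmooth i j).continuous
      fun_prop)
  set C := C2 * C4 + C3 + C5 ^ 2 * |C1| * C4 with hCdef
  have hCpos : 0 < C := by positivity
  obtain ⟨d, hd, hfin⟩ := scalar_est c C hc hCpos
  refine ⟨d, hd, ?_⟩
  intro r hr ω hω lam phi0 hphi0 heq0
  -- normalise
  obtain ⟨phi, hphi, heq⟩ : ∃ phi : Fin m → ℂ, ‖phi‖ = 1 ∧
      (lam • cmap A0 + ((r : ℂ) * Complex.I) • cmap (AA ω) + cmap L).mulVec phi = 0 := by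
    refine ⟨((‖phi0‖⁻¹ : ℝ) : ℂ) • phi0, ?_, ?_⟩
    · rw [norm_smul, Complex.norm_real, norm_inv, norm_norm,
        inv_mul_cancel₀ (norm_ne_zero_iff.2 hphi0)]
    · rw [mulVec_smul, heq0, smul_zero]
  have hphi0' : phi ≠ 0 := by
    rintro rfl
    simp at hphi
  have hmem : phi ∈ Metric.sphere (0 : Fin m → ℂ) 1 := by simpa using hphi
  have e1 := congrArg Complex.re (qf_eqn A0 (AA ω) L 1 lam r phi heq)
  have e2 := congrArg Complex.re (qf_eqn A0 (AA ω) L S lam r phi heq)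
  have e3 := congrArg Complex.im (qf_eqn A0 (AA ω) L (K ω) lam r phi heq)
  simp only [one_mul, Complex.add_re, Complex.add_im, Complex.mul_re, Complex.mul_im,
    Complex.ofReal_re, Complex.ofReal_im, Complex.I_re, Complex.I_im, Complex.zero_re,
    Complex.zero_im, qf_sym_im hA0sym, qf_sym_im (hAAsym ω), qf_sym_im hSA0,
    qf_skew_re (hKA0 ω hω)] at e1 e2 e3
  have hs2 : 0 ≤ -(qf (S * AA ω) phi).im := by
    have := hS2 ω hω phi
    rwa [reIP_eq, smul_mulVec, smul_dotProduct, smul_eq_mul, ← qf, qf_skewP] at this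
  have hA0p : 0 < (qf A0 phi).re := by
    have := hA0pos phi hphi0'
    rwa [reIP_eq] at this
  have hLp : 0 ≤ (qf L phi).re := by
    have := hLnn phi
    rwa [reIP_eq] at this
  have hμ : 0 ≤ -lam.re := by
    by_contra hcon
    push Not at hcon
    nlinarith
  have hgx : c - C2 * (qf B phi).re ≤ (qf (K ω * AA ω) phi).re := hg (ω, phi) ⟨hω, hmem⟩
  have hkx : |(qf (K ω * A0) phi).im| ≤ C3 := hk (ω, phi) ⟨hω, hmem⟩
  have hax := (le_abs_self _).trans (ha phi hmem)
  have hf : (qf B phi).re ≤ C4 * -lam.re := by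
    have h6 : 0 ≤ r * -(qf (S * AA ω) phi).im := mul_nonneg hr hs2
    have h7 := mul_le_mul_of_nonneg_right hax hμ
    rw [hBre]
    nlinarith
  have hh : ((qf (K ω * L) phi).im) ^ 2 ≤ C5 ^ 2 * |C1| * C4 * -lam.re := by
    have h1 := qf_mul_bound (K ω) L phi hphi
    have h2 := (le_abs_self _).trans (hK5 ω hω)
    have h3 : |(qf (K ω * L) phi).im| ≤ C5 * ‖(cmap L).mulVec phi‖ := h1.trans (by gcongr)
    have h4 := pow_le_pow_left₀ (abs_nonneg _) h3 2
    rw [sq_abs, mul_pow] at h4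
    calc _ ≤ _ := h4
      _ ≤ C5 ^ 2 * (|C1| * (C4 * -lam.re)) := by
        gcongr
        refine (hC1 phi).trans ?_
        have := hBnn phi
        calc _ ≤ |C1| * (qf B phi).re := by gcongr; exact le_abs_self _
          _ ≤ _ := by gcongr
      _ = _ := by ring
  have key := hfin r (-lam.re) hr hμ (-(qf (K ω * L) phi).im) ?_ ?_
  · linarith
  · rw [neg_sq]
    refine hh.trans ?_
    gcongr
    rw [hCdef]
    have : 0 < C2 * C4 := by positivity
    linarith
  · have h1 : -lam.re * (qf (K ω * A0) phi).im ≤ -lam.re * C3 :=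
      mul_le_mul_of_nonneg_left ((le_abs_self _).trans hkx) hμ
    have h2 : r * (c - C2 * (C4 * -lam.re)) ≤ r * (qf (K ω * AA ω) phi).re := by
      refine mul_le_mul_of_nonneg_left (le_trans ?_ hgx) hr
      gcongr
    have h3 : -lam.re * C3 ≤ C * -lam.re := by
      rw [mul_comm]
      gcongr
      rw [hCdef]
      have : 0 < C2 * C4 := by positivity
      have : 0 ≤ C5 ^ 2 * |C1| * C4 := by positivity
      linarith
    have h4 : r * (c - C * -lam.re) ≤ r * (c - C2 * (C4 * -lam.re)) := by
      rw [← mul_assoc]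
      gcongr
      rw [hCdef]
      have : 0 ≤ C5 ^ 2 * |C1| * C4 := by positivity
      linarith
    linarith
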